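/- arXiv:1903.01100 — 2 statements merged into one kernel-verified Lean document; each statement's English description precedes it below -/
import Mathlib

section
/- The space ℓ² does not embed isomorphically into ℓ¹: there is no continuous linear map T : ℓ² → ℓ¹ that is bounded below, i.e., there do not exist T continuous linear and a constant c > 0 such that c · ‖a‖_{ℓ²} ≤ ‖T a‖_{ℓ¹} for all a ∈ ℓ². -/
/-!
Let `T : ℓᵖ → ℓ¹` be bounded with `p > 1`. A sum of `N` unit vectors with disjoint supports has
norm at most `N^(1/p)`, so the norm of its image under any bounded operator is sublinear in `N`.
For a functional, rotating each term to make its value nonnegative turns this into weak nullity of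
the unit vectors, so their images under `T` tend to zero in every coordinate. In `ℓ¹` a
coordinatewise null sequence is asymptotically disjoint from any fixed vector; hence if `T` were
bounded below, the images of some sums of `N` unit vectors would grow linearly in `N`.
-/

open Filter Topology
open scoped ENNReal

section Sublinear

variable {ι : Type*} [DecidableEq ι] {E : ι → Type*} [∀ i, NormedAddCommGroup (E i)] {p : ℝ≥0∞}

theorem norm_sum_lp_single_le_card_rpow (hp : 0 < p) {v : ∀ i, E i} (hv : ∀ i, ‖v i‖ ≤ 1)
    (s : Finset ι) :
    ‖∑ i ∈ s, lp.single p i (v i)‖ ≤ (s.card : ℝ) ^ p⁻¹.toReal := by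
  obtain rfl | hp_top := eq_or_ne p ∞
  · rw [ENNReal.inv_top, ENNReal.toReal_zero, Real.rpow_zero]
    refine lp.norm_le_of_forall_le zero_le_one fun j => ?_
    rw [lp.coeFn_sum, Finset.sum_apply]
    simp only [lp.coeFn_single, Finset.sum_pi_single]
    split_ifs
    · exact hv j
    · exact norm_zero.trans_le zero_le_one
  · have hp_pos : 0 < p.toReal := ENNReal.toReal_pos hp.ne' hp_top
    rw [ENNReal.toReal_inv, Real.le_rpow_inv_iff_of_pos (lp.norm_nonneg' _) (by positivity) hp_pos,
      lp.norm_sum_single hp_pos]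
    calc ∑ i ∈ s, ‖v i‖ ^ p.toReal
        ≤ ∑ _i ∈ s, (1 : ℝ) := Finset.sum_le_sum fun i _ =>
          Real.rpow_le_one (norm_nonneg _) (hv i) hp_pos.le
      _ = s.card := by simp

theorem eventually_mul_rpow_lt_mul_natCast {r : ℝ} (hr : r < 1) (C : ℝ) {ε : ℝ} (hε : 0 < ε) :
    ∀ᶠ N : ℕ in atTop, C * (N : ℝ) ^ r < N * ε := by
  have h_tendsto : Tendsto (fun N : ℕ => C * (N : ℝ) ^ (-(1 - r))) atTop (𝓝 0) := by
    simpa using ((tendsto_rpow_neg_atTop (sub_pos.2 hr)).comp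
      tendsto_natCast_atTop_atTop).const_mul C
  filter_upwards [h_tendsto.eventually_lt_const hε, eventually_gt_atTop 0] with N hN hN_pos
  have hN_pos' : (0 : ℝ) < N := Nat.cast_pos.2 hN_pos
  calc C * (N : ℝ) ^ r = N * (C * (N : ℝ) ^ (-(1 - r))) := by
        rw [neg_sub, Real.rpow_sub_one hN_pos'.ne']
        field_simp
    _ < N * ε := mul_lt_mul_of_pos_left hN hN_pos'

variable {𝕜 : Type*} [RCLike 𝕜] [∀ i, NormedSpace 𝕜 (E i)] [Fact (1 ≤ p)]

theorem eventually_norm_map_sum_lp_single_lt {F : Type*} [SeminormedAddCommGroup F]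
    [NormedSpace 𝕜 F] (hp : 1 < p) (T : lp E p →L[𝕜] F) {ε : ℝ} (hε : 0 < ε) :
    ∀ᶠ N : ℕ in atTop, ∀ s : Finset ι, s.card = N → ∀ v : ∀ i, E i, (∀ i, ‖v i‖ ≤ 1) →
      ‖T (∑ i ∈ s, lp.single p i (v i))‖ < N * ε := by
  have h_exponent : p⁻¹.toReal < 1 := by
    simpa using ENNReal.toReal_strict_mono ENNReal.one_ne_top (ENNReal.inv_lt_one.2 hp)
  filter_upwards [eventually_mul_rpow_lt_mul_natCast h_exponent ‖T‖ hε] with N hN s hs v hv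
  refine lt_of_le_of_lt (T.le_opNorm_of_le ?_) hN
  simpa only [hs] using norm_sum_lp_single_le_card_rpow (zero_lt_one.trans hp) hv s

theorem tendsto_map_lp_single_cofinite (hp : 1 < p) (f : lp E p →L[𝕜] 𝕜) {v : ∀ i, E i}
    (hv : ∀ i, ‖v i‖ ≤ 1) :
    Tendsto (fun i => f (lp.single p i (v i))) cofinite (𝓝 0) := by
  refine NormedAddGroup.tendsto_nhds_zero.2 fun ε hε => ?_
  by_contra h_not
  have h_infinite : {i | ¬‖f (lp.single p i (v i))‖ < ε}.Infinite := h_not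
  choose u hu_norm hu using fun i => RCLike.exists_norm_eq_mul_self (f (lp.single p i (v i)))
  obtain ⟨N, hN⟩ := (eventually_norm_map_sum_lp_single_lt hp f hε).exists
  obtain ⟨s, hs, hs_card⟩ := h_infinite.exists_subset_card_eq N
  have h_rotated : ‖f (∑ i ∈ s, lp.single p i (u i • v i))‖
      = ∑ i ∈ s, ‖f (lp.single p i (v i))‖ := by
    simp only [map_sum, lp.single_smul, map_smul, smul_eq_mul, ← hu]
    rw [← RCLike.ofReal_sum, RCLike.norm_ofReal,
      abs_of_nonneg (Finset.sum_nonneg fun _ _ => norm_nonneg _)]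
  refine (hN s hs_card (fun i => u i • v i) fun i => ?_).not_ge ?_
  · rw [norm_smul, hu_norm, one_mul]
    exact hv i
  · rw [h_rotated, ← hs_card, ← nsmul_eq_mul]
    exact s.card_nsmul_le_sum _ _ fun i hi => not_lt.1 (hs hi)

end Sublinear

section AsymptoticAdditivity

variable {κ : Type*} {F : κ → Type*} [∀ k, NormedAddCommGroup (F k)]

theorem hasSum_norm_lp_one (y : lp F 1) : HasSum (fun k => ‖y k‖) ‖y‖ := by
  simpa using lp.hasSum_norm (p := 1) (by norm_num) y

theorem tendsto_norm_add_norm_sub_norm_add_lp_one {α : Type*} {l : Filter α} {x : α → lp F 1}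
    (hx : ∀ k, Tendsto (fun a => x a k) l (𝓝 0)) (y : lp F 1) :
    Tendsto (fun a => ‖y‖ + ‖x a‖ - ‖y + x a‖) l (𝓝 0) := by
  have h_hasSum (a : α) :
      HasSum (fun k => ‖y k‖ + ‖x a k‖ - ‖y k + x a k‖) (‖y‖ + ‖x a‖ - ‖y + x a‖) :=
    ((hasSum_norm_lp_one y).add (hasSum_norm_lp_one (x a))).sub (hasSum_norm_lp_one (y + x a))
  have h_coord (k : κ) : Tendsto (fun a => ‖y k‖ + ‖x a k‖ - ‖y k + x a k‖) l (𝓝 0) := by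
    simpa using ((hx k).norm.const_add ‖y k‖).sub ((hx k).const_add (y k)).norm
  have h_bound (a : α) (k : κ) : ‖‖y k‖ + ‖x a k‖ - ‖y k + x a k‖‖ ≤ 2 * ‖y k‖ := by
    rw [Real.norm_of_nonneg (sub_nonneg.2 (norm_add_le _ _))]
    have := norm_sub_le (y k + x a k) (y k)
    rw [add_sub_cancel_left] at this
    linarith
  simpa only [(h_hasSum _).tsum_eq, tsum_zero] using
    tendsto_tsum_of_dominated_convergence ((hasSum_norm_lp_one y).summable.mul_left 2) h_coord
      (Eventually.of_forall h_bound)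

theorem exists_card_eq_mul_le_norm_sum_lp_one {ι : Type*} [Infinite ι] {x : ι → lp F 1}
    (hx : ∀ k, Tendsto (fun i => x i k) cofinite (𝓝 0)) {δ c : ℝ} (hδ : δ < c)
    (hc : ∀ i, c ≤ ‖x i‖) (N : ℕ) :
    ∃ s : Finset ι, s.card = N ∧ N * δ ≤ ‖∑ i ∈ s, x i‖ := by
  induction N with
  | zero => exact ⟨∅, by simp⟩
  | succ N ih =>
    obtain ⟨s, hs_card, hs⟩ := ih
    have h_additive := (tendsto_norm_add_norm_sub_norm_add_lp_one hx
      (∑ i ∈ s, x i)).eventually_lt_const (sub_pos.2 hδ)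
    obtain ⟨i, hi, hi_notMem⟩ := (h_additive.and s.eventually_cofinite_notMem).exists
    refine ⟨s.cons i hi_notMem, by rw [Finset.card_cons, hs_card], ?_⟩
    rw [Finset.sum_cons, add_comm (x i)]
    push_cast
    linarith [hc i]

end AsymptoticAdditivity

theorem l2_not_embed_in_l1_general {𝕜 ι κ : Type*} [RCLike 𝕜] [Infinite ι] {E : ι → Type*}
    [∀ i, NormedAddCommGroup (E i)] [∀ i, NormedSpace 𝕜 (E i)] [∀ i, Nontrivial (E i)]
    {p : ℝ≥0∞} [Fact (1 ≤ p)] (hp : 1 < p) :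
    ¬ ∃ (T : lp E p →L[𝕜] lp (fun _ : κ => 𝕜) 1) (c : ℝ), 0 < c ∧
        ∀ a : lp E p, c * ‖a‖ ≤ ‖T a‖ := by
  classical
  rintro ⟨T, c, hc, hT⟩
  have h_unit (i : ι) : ∃ v : E i, ‖v‖ = 1 :=
    let ⟨w, hw⟩ := exists_ne (0 : E i)
    ⟨_, norm_smul_inv_norm (𝕜 := 𝕜) hw⟩
  choose v hv using h_unit
  have h_null (k : κ) : Tendsto (fun i => T (lp.single p i (v i)) k) cofinite (𝓝 0) :=
    tendsto_map_lp_single_cofinite hp ((lp.evalCLM 𝕜 (fun _ : κ => 𝕜) 1 k).comp T)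
      fun i => (hv i).le
  have h_below (i : ι) : c ≤ ‖T (lp.single p i (v i))‖ := by
    simpa only [lp.norm_single (zero_lt_one.trans hp), hv, mul_one] using
      hT (lp.single p i (v i))
  obtain ⟨N, hN⟩ := (eventually_norm_map_sum_lp_single_lt hp T (half_pos hc)).exists
  obtain ⟨s, hs_card, hs⟩ :=
    exists_card_eq_mul_le_norm_sum_lp_one h_null (half_lt_self hc) h_below N
  rw [← map_sum] at hs
  exact (hN s hs_card v fun i => (hv i).le).not_ge hs

/-- `ℓ²` does not embed isomorphically into `ℓ¹`: there is no continuous linear map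
`T : ℓ² → ℓ¹` that is bounded below. -/
theorem l2_not_embed_in_l1 :
    ¬ ∃ (T : lp (fun _ : ℕ => ℝ) 2 →L[ℝ] lp (fun _ : ℕ => ℝ) 1) (c : ℝ), 0 < c ∧
        ∀ a : lp (fun _ : ℕ => ℝ) 2, c * ‖a‖ ≤ ‖T a‖ :=
  l2_not_embed_in_l1_general ENNReal.one_lt_two
end

section
/- In the rooted-tree setting, let A₀ be a vertex with A₀.length = n ≥ 1. Consider the set F of all functions f : List ℕ → ℝ such that f converges to 1 along every branch that passes through A₀ and f converges to 0 along every branch that does not pass through A₀. Then the infimum of Var f over f ∈ F equals 3^{−n} (and it is attained by the indicator function of the set of lists having A₀ as a prefix). -/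
/-- The set of vertices of the rooted tree determined by `children`:
the empty list is a vertex, and `s ++ [a]` is a vertex whenever `s` is a vertex
and `a ∈ children s`. -/
inductive IsVertex (children : List ℕ → Finset ℕ) : List ℕ → Prop
  | nil : IsVertex children []
  | append (s : List ℕ) (a : ℕ) : IsVertex children s → a ∈ children s →
      IsVertex children (s ++ [a])

/-- The weighted tree variation
`Var f = Σ_{vertices s} Σ_{a ∈ children s} 3^{−(s.length+1)} · |f (s ++ [a]) − f s|`,
with values in `[0,∞]`. -/
noncomputable def treeVar (children : List ℕ → Finset ℕ) (f : List ℕ → ℝ) : ENNReal :=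
  ∑' (s : {s : List ℕ // IsVertex children s}) (a : {a : ℕ // a ∈ children s.1}),
    ENNReal.ofReal ((3 : ℝ)⁻¹ ^ (s.1.length + 1) * |f (s.1 ++ [a.1]) - f s.1|)

/-- `x : ℕ → ℕ` is a branch if each of its initial segments is a vertex. -/
def IsBranch (children : List ℕ → Finset ℕ) (x : ℕ → ℕ) : Prop :=
  ∀ n : ℕ, IsVertex children (List.ofFn (fun i : Fin n => x i))

/-- The branch `x` passes through the vertex `A` if `A` is the initial segment of `x`
of length `A.length`. -/
def PassesThrough (x : ℕ → ℕ) (A : List ℕ) : Prop :=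
  A = List.ofFn (fun i : Fin A.length => x i)

/-- `f` converges to `c` along the branch `x` if `f [x 0, …, x (n−1)] → c` as `n → ∞`. -/
def ConvergesAlong (f : List ℕ → ℝ) (x : ℕ → ℕ) (c : ℝ) : Prop :=
  Filter.Tendsto (fun n : ℕ => f (List.ofFn (fun i : Fin n => x i))) Filter.atTop (nhds c)

/-! Rescale the variation over the subtree rooted at `v` by `3 ^ v.length`, so that the edges
leaving `v` have weight `1/3`. Three times this quantity is the sum, over the children `w` of
`v`, of `|f w - f v|` plus the rescaled variation at `w`. As there are at least three summands,
some child has a summand no larger than the rescaled variation at `v`. Moving to such a child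
at every step gives a branch along which `f` moves away from `f v` by at most the rescaled
variation at `v`; this bounds `|c - f v|` when `f` has limit `c` on all branches through `v`.
Two siblings on which `f` has limits `c` and `d` then force the rescaled variation at their
parent to be at least `|c - d| / 3`, and a function with a single jump, across the edge into
`A₀`, attains this bound. -/

open Filter Topology
open scoped ENNReal

variable {children : List ℕ → Finset ℕ}

theorem ofFn_prefix_ofFn {α : Type*} (x : ℕ → α) {m n : ℕ} (h : m ≤ n) :
    List.ofFn (fun i : Fin m => x i) <+: List.ofFn (fun i : Fin n => x i) := by
  obtain ⟨k, rfl⟩ := Nat.exists_eq_add_of_le h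
  rw [List.ofFn_add]
  exact List.prefix_append _ _

theorem exists_seq_forall_ofFn {α : Type*} {P : List α → Prop} (nil : P [])
    (exists_append : ∀ s, P s → ∃ a, P (s ++ [a])) :
    ∃ x : ℕ → α, ∀ n, P (List.ofFn fun i : Fin n => x i) := by
  choose next hnext using exists_append
  let V : ℕ → {s // P s} := Nat.rec ⟨[], nil⟩ fun _ s => ⟨s.1 ++ [next s.1 s.2], hnext s.1 s.2⟩
  let x : ℕ → α := fun n => next (V n).1 (V n).2
  have ofFn_eq : ∀ n, (List.ofFn fun i : Fin n => x i) = (V n).1 := by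
    intro n
    induction n with
    | zero => rfl
    | succ n ih =>
      rw [List.ofFn_succ_last]
      exact congrArg (· ++ [x n]) ih
  exact ⟨x, fun n => ofFn_eq n ▸ (V n).2⟩

theorem exists_append_singleton_prefix {α : Type*} {s t : List α} (h : s <+: t) (hne : s ≠ t) :
    ∃ a, s ++ [a] <+: t := by
  obtain ⟨_ | ⟨a, r⟩, rfl⟩ := h
  · simp at hne
  · exact ⟨a, r, by simp⟩

theorem not_append_singleton_prefix {α : Type*} (s : List α) (a : α) : ¬ s ++ [a] <+: s :=
  fun h => by simpa using h.length_le

theorem passesThrough_iff_prefix {x : ℕ → ℕ} {A : List ℕ} {n : ℕ} (h : A.length ≤ n) :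
    PassesThrough x A ↔ A <+: List.ofFn (fun i : Fin n => x i) := by
  have hx := ofFn_prefix_ofFn x h
  constructor
  · intro hA
    exact hA ▸ hx
  · intro hA
    exact (List.prefix_of_prefix_length_le hA hx (by simp)).eq_of_length (by simp)

theorem PassesThrough.eq_of_append_singleton {x : ℕ → ℕ} {s : List ℕ} {a b : ℕ}
    (ha : PassesThrough x (s ++ [a])) (hb : PassesThrough x (s ++ [b])) : a = b := by
  have ha' := (passesThrough_iff_prefix (n := s.length + 1) (by simp)).1 ha
  have hb' := (passesThrough_iff_prefix (n := s.length + 1) (by simp)).1 hb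
  have h := (List.prefix_of_prefix_length_le ha' hb' (by simp)).eq_of_length (by simp)
  simpa using h

theorem isVertex_append_singleton {s : List ℕ} {a : ℕ} :
    IsVertex children (s ++ [a]) ↔ IsVertex children s ∧ a ∈ children s := by
  refine ⟨fun h => ?_, fun h => .append s a h.1 h.2⟩
  generalize ht : s ++ [a] = t at h
  cases h with
  | nil => simp at ht
  | append s' a' hs' ha' =>
    obtain ⟨rfl, rfl⟩ : s = s' ∧ a = a' := by simpa using List.append_inj' ht rfl
    exact ⟨hs', ha'⟩

theorem IsVertex.of_prefix {s t : List ℕ} (ht : IsVertex children t) (hst : s <+: t) :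
    IsVertex children s := by
  induction ht with
  | nil => exact List.prefix_nil.1 hst ▸ .nil
  | append t a ht ha ih =>
    rcases List.prefix_concat_iff.1 hst with rfl | hst
    · exact .append t a ht ha
    · exact ih hst

/-- The vertices of the subtree rooted at `v`, including `v` itself if it is a vertex. -/
def descendants (children : List ℕ → Finset ℕ) (v : List ℕ) : Set (List ℕ) :=
  {s | IsVertex children s ∧ v <+: s}

theorem descendants_eq_insert {v : List ℕ} (hv : IsVertex children v) :
    descendants children v = {v} ∪ ⋃ a ∈ children v, descendants children (v ++ [a]) := by
  ext s
  simp only [descendants, Set.mem_union, Set.mem_singleton_iff, Set.mem_iUnion, Set.mem_ofPred_eq,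
    exists_prop]
  constructor
  · rintro ⟨hs, hvs⟩
    rcases eq_or_ne v s with rfl | hne
    · exact .inl rfl
    · obtain ⟨a, ha⟩ := exists_append_singleton_prefix hvs hne
      exact .inr ⟨a, (isVertex_append_singleton.1 (hs.of_prefix ha)).2, hs, ha⟩
  · rintro (rfl | ⟨a, -, hs, has⟩)
    · exact ⟨hv, List.prefix_rfl⟩
    · exact ⟨hs, (List.prefix_append v [a]).trans has⟩

theorem pairwise_disjoint_descendants_append_singleton (v : List ℕ) :
    Pairwise (Function.onFun Disjoint fun a => descendants children (v ++ [a])) := by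
  refine fun a b hab => Set.disjoint_left.2 fun s ha hb => hab ?_
  have h := (List.prefix_of_prefix_length_le ha.2 hb.2 (by simp)).eq_of_length (by simp)
  simpa using h

theorem exists_isBranch_of_exists_append {P : List ℕ → Prop} {v : List ℕ}
    (hv : IsVertex children v) (hPv : P v)
    (hP : ∀ s ∈ descendants children v, P s → ∃ a ∈ children s, P (s ++ [a])) :
    ∃ x, IsBranch children x ∧ PassesThrough x v ∧
      ∀ n, v.length ≤ n → P (List.ofFn fun i : Fin n => x i) := by
  obtain ⟨x, hx⟩ := exists_seq_forall_ofFn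
    (P := fun s => IsVertex children s ∧ (s <+: v ∨ v <+: s ∧ P s))
    ⟨.nil, .inl List.nil_prefix⟩ <| by
      rintro s ⟨hs, hsv⟩
      by_cases h : v <+: s ∧ P s
      · obtain ⟨a, ha, hPa⟩ := hP s ⟨hs, h.1⟩ h.2
        exact ⟨a, .append s a hs ha, .inr ⟨h.1.trans (List.prefix_append s [a]), hPa⟩⟩
      · have hne : s ≠ v := fun e => h ⟨e ▸ List.prefix_rfl, e ▸ hPv⟩
        obtain ⟨a, ha⟩ := exists_append_singleton_prefix (hsv.resolve_right h) hne
        exact ⟨a, hv.of_prefix ha, .inl ha⟩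
  have prefix_and_P : ∀ n, v.length ≤ n →
      v <+: List.ofFn (fun i : Fin n => x i) ∧ P (List.ofFn fun i : Fin n => x i) := by
    intro n hn
    rcases (hx n).2 with h | h
    · have h_eq := h.eq_of_length_le (by simpa using hn)
      exact ⟨h_eq ▸ List.prefix_rfl, h_eq ▸ hPv⟩
    · exact h
  exact ⟨x, fun n => (hx n).1, (passesThrough_iff_prefix le_rfl).2 (prefix_and_P _ le_rfl).1,
    fun n hn => (prefix_and_P n hn).2⟩

section Variation

variable {E : Type*} [PseudoEMetricSpace E]

/-- The part of the weighted tree variation of `f` contributed by the edges leaving `s`. -/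
noncomputable def vertexVar (children : List ℕ → Finset ℕ) (f : List ℕ → E) (s : List ℕ) : ℝ≥0∞ :=
  ∑ a ∈ children s, 3⁻¹ ^ (s.length + 1) * edist (f s) (f (s ++ [a]))

/-- The weighted variation of `f` over the subtree rooted at `v`, with the factor `3 ^ v.length`
that gives the edges leaving `v` the weight `1/3`, as if `v` were the root. -/
noncomputable def subtreeVar (children : List ℕ → Finset ℕ) (f : List ℕ → E) (v : List ℕ) :
    ℝ≥0∞ :=
  3 ^ v.length * ∑' s : descendants children v, vertexVar children f s

theorem tsum_descendants (g : List ℕ → ℝ≥0∞) {v : List ℕ} (hv : IsVertex children v) :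
    ∑' s : descendants children v, g s =
      g v + ∑ a ∈ children v, ∑' s : descendants children (v ++ [a]), g s := by
  have hdisj : Disjoint {v} (⋃ a ∈ children v, descendants children (v ++ [a])) := by
    simp [descendants, not_append_singleton_prefix]
  rw [descendants_eq_insert hv, ENNReal.summable.tsum_union_disjoint hdisj ENNReal.summable,
    tsum_singleton v g, Summable.tsum_finset_bUnion_disjoint
      ((pairwise_disjoint_descendants_append_singleton v).set_pairwise _)
      fun _ _ => ENNReal.summable]

theorem three_pow_mul_three_inv_pow (n : ℕ) : (3 : ℝ≥0∞) ^ n * 3⁻¹ ^ n = 1 := by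
  rw [← mul_pow, ENNReal.mul_inv_cancel (by simp) (by simp), one_pow]

theorem three_mul_subtreeVar (f : List ℕ → E) {v : List ℕ} (hv : IsVertex children v) :
    3 * subtreeVar children f v =
      ∑ a ∈ children v, (edist (f v) (f (v ++ [a])) + subtreeVar children f (v ++ [a])) := by
  have three_pow_mul_vertexVar : 3 ^ (v.length + 1) * vertexVar children f v =
      ∑ a ∈ children v, edist (f v) (f (v ++ [a])) := by
    simp only [vertexVar, Finset.mul_sum, ← mul_assoc, three_pow_mul_three_inv_pow, one_mul]
  simp only [subtreeVar, List.length_append, List.length_singleton]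
  rw [tsum_descendants _ hv, ← mul_assoc, ← pow_succ', mul_add, three_pow_mul_vertexVar,
    Finset.mul_sum, Finset.sum_add_distrib]

theorem exists_mem_children_edist_add_subtreeVar_le (f : List ℕ → E) {v : List ℕ}
    (hv : IsVertex children v) (hcard : 3 ≤ (children v).card) :
    ∃ a ∈ children v, edist (f v) (f (v ++ [a])) + subtreeVar children f (v ++ [a]) ≤
      subtreeVar children f v := by
  have hne : (children v).Nonempty := Finset.card_pos.1 (by omega)
  obtain ⟨a, ha, hmin⟩ := (children v).exists_min_image
    (fun a => edist (f v) (f (v ++ [a])) + subtreeVar children f (v ++ [a])) hne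
  refine ⟨a, ha, (ENNReal.mul_le_mul_iff_right (a := 3) (by simp) (by simp)).1 ?_⟩
  calc 3 * (edist (f v) (f (v ++ [a])) + subtreeVar children f (v ++ [a]))
      ≤ (children v).card • (edist (f v) (f (v ++ [a])) + subtreeVar children f (v ++ [a])) := by
        rw [nsmul_eq_mul]
        gcongr
        exact_mod_cast hcard
    _ ≤ ∑ b ∈ children v, (edist (f v) (f (v ++ [b])) + subtreeVar children f (v ++ [b])) :=
        Finset.card_nsmul_le_sum _ _ _ hmin
    _ = 3 * subtreeVar children f v := (three_mul_subtreeVar f hv).symm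

theorem edist_le_subtreeVar {f : List ℕ → E} {c : E} {v : List ℕ} (hv : IsVertex children v)
    (hcard : ∀ s ∈ descendants children v, 3 ≤ (children s).card)
    (hf : ∀ x, IsBranch children x → PassesThrough x v →
      Tendsto (fun n : ℕ => f (List.ofFn fun i : Fin n => x i)) atTop (𝓝 c)) :
    edist (f v) c ≤ subtreeVar children f v := by
  obtain ⟨x, hx, hxv, hle⟩ := exists_isBranch_of_exists_append
    (P := fun s => edist (f v) (f s) + subtreeVar children f s ≤ subtreeVar children f v)
    hv (by simp) <| by
      intro s hs hle
      obtain ⟨a, ha, hstep⟩ := exists_mem_children_edist_add_subtreeVar_le f hs.1 (hcard s hs)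
      refine ⟨a, ha, ?_⟩
      calc edist (f v) (f (s ++ [a])) + subtreeVar children f (s ++ [a])
          ≤ edist (f v) (f s) + edist (f s) (f (s ++ [a])) + subtreeVar children f (s ++ [a]) := by
            gcongr
            exact edist_triangle _ _ _
        _ ≤ edist (f v) (f s) + subtreeVar children f s := by
            rw [add_assoc]
            gcongr
        _ ≤ subtreeVar children f v := hle
  refine le_of_tendsto (tendsto_const_nhds.edist (hf x hx hxv)) ?_
  filter_upwards [eventually_ge_atTop v.length] with n hn
  exact le_self_add.trans (hle n hn)

theorem edist_le_three_mul_subtreeVar {f : List ℕ → E} {c d : E} {s : List ℕ} {a b : ℕ}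
    (hs : IsVertex children s) (ha : a ∈ children s) (hb : b ∈ children s) (hab : a ≠ b)
    (hc : edist (f (s ++ [a])) c ≤ subtreeVar children f (s ++ [a]))
    (hd : edist (f (s ++ [b])) d ≤ subtreeVar children f (s ++ [b])) :
    edist c d ≤ 3 * subtreeVar children f s := by
  have hsub : {a, b} ⊆ children s := by simp [Finset.insert_subset_iff, ha, hb]
  calc edist c d
      ≤ edist (f s) c + edist (f s) d := edist_triangle_left _ _ _
    _ ≤ edist (f s) (f (s ++ [a])) + edist (f (s ++ [a])) c +
          (edist (f s) (f (s ++ [b])) + edist (f (s ++ [b])) d) := by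
        gcongr <;> exact edist_triangle _ _ _
    _ ≤ edist (f s) (f (s ++ [a])) + subtreeVar children f (s ++ [a]) +
          (edist (f s) (f (s ++ [b])) + subtreeVar children f (s ++ [b])) := by gcongr
    _ = ∑ e ∈ {a, b}, (edist (f s) (f (s ++ [e])) + subtreeVar children f (s ++ [e])) :=
        (Finset.sum_pair (f := fun e => edist (f s) (f (s ++ [e])) +
          subtreeVar children f (s ++ [e])) hab).symm
    _ ≤ ∑ e ∈ children s, (edist (f s) (f (s ++ [e])) + subtreeVar children f (s ++ [e])) :=
        Finset.sum_le_sum_of_subset hsub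
    _ = 3 * subtreeVar children f s := (three_mul_subtreeVar f hs).symm

end Variation

theorem treeVar_eq_tsum_vertexVar (f : List ℕ → ℝ) :
    treeVar children f = ∑' s : {s // IsVertex children s}, vertexVar children f s := by
  refine tsum_congr fun s => ?_
  rw [vertexVar, ← Finset.tsum_subtype]
  refine tsum_congr fun a => ?_
  rw [edist_comm, edist_dist, Real.dist_eq, ENNReal.ofReal_mul (by positivity),
    ENNReal.ofReal_pow (by positivity), ENNReal.ofReal_inv_of_pos (by simp), ENNReal.ofReal_ofNat]

theorem subtreeVar_le_treeVar (f : List ℕ → ℝ) (v : List ℕ) :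
    subtreeVar children f v ≤ 3 ^ v.length * treeVar children f := by
  rw [subtreeVar, treeVar_eq_tsum_vertexVar]
  gcongr
  exact ENNReal.tsum_mono_subtype _ fun s hs => hs.1

/-- `f` has trace `c` on the cylinder of branches through `A` and trace `d` on its complement. -/
def HasCylinderTrace (children : List ℕ → Finset ℕ) (A : List ℕ) (c d : ℝ) (f : List ℕ → ℝ) :
    Prop :=
  ∀ x : ℕ → ℕ, IsBranch children x →
    (PassesThrough x A → ConvergesAlong f x c) ∧ (¬ PassesThrough x A → ConvergesAlong f x d)

theorem hasCylinderTrace_ite_prefix (A : List ℕ) (c d : ℝ) :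
    HasCylinderTrace children A c d (fun s => if A <+: s then c else d) := by
  intro x _
  constructor <;> intro hA <;> refine tendsto_const_nhds.congr' ?_ <;>
    filter_upwards [eventually_ge_atTop A.length] with n hn
  · rw [if_pos ((passesThrough_iff_prefix hn).1 hA)]
  · rw [if_neg (mt (passesThrough_iff_prefix hn).2 hA)]

theorem treeVar_ite_prefix {s : List ℕ} {a : ℕ} (hs : IsVertex children s) (ha : a ∈ children s)
    (c d : ℝ) :
    treeVar children (fun t => if s ++ [a] <+: t then c else d) =
      3⁻¹ ^ (s.length + 1) * edist c d := by
  set f : List ℕ → ℝ := fun t => if s ++ [a] <+: t then c else d with hf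
  have edist_eq_zero_of_ne : ∀ t b, s ++ [a] ≠ t ++ [b] → edist (f t) (f (t ++ [b])) = 0 := by
    intro t b h
    simp [hf, List.prefix_concat_iff, h]
  rw [treeVar_eq_tsum_vertexVar, tsum_eq_single ⟨s, hs⟩, vertexVar,
    Finset.sum_eq_single_of_mem a ha]
  · simp [hf, not_append_singleton_prefix, edist_comm]
  · intro b _ hb
    rw [edist_eq_zero_of_ne s b (by simpa using hb.symm), mul_zero]
  · intro t ht
    refine Finset.sum_eq_zero fun b _ => ?_
    have hne : s ++ [a] ≠ t ++ [b] := fun h => ht (Subtype.ext (List.append_inj_left' h rfl).symm)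
    rw [edist_eq_zero_of_ne t b hne, mul_zero]

theorem HasCylinderTrace.le_treeVar {f : List ℕ → ℝ} {c d : ℝ} {s : List ℕ} {a b : ℕ}
    (hf : HasCylinderTrace children (s ++ [a]) c d f) (hs : IsVertex children s)
    (ha : a ∈ children s) (hb : b ∈ children s) (hab : a ≠ b)
    (hcard_a : ∀ t ∈ descendants children (s ++ [a]), 3 ≤ (children t).card)
    (hcard_b : ∀ t ∈ descendants children (s ++ [b]), 3 ≤ (children t).card) :
    3⁻¹ ^ (s.length + 1) * edist c d ≤ treeVar children f := by
  have hc := edist_le_subtreeVar (.append s a hs ha) hcard_a fun x hx hxa => (hf x hx).1 hxa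
  have hd := edist_le_subtreeVar (.append s b hs hb) hcard_b fun x hx hxb =>
    (hf x hx).2 fun hxa => hab (hxa.eq_of_append_singleton hxb)
  calc 3⁻¹ ^ (s.length + 1) * edist c d
      ≤ 3⁻¹ ^ (s.length + 1) * (3 * (3 ^ s.length * treeVar children f)) := by
        gcongr
        exact (edist_le_three_mul_subtreeVar hs ha hb hab hc hd).trans
          (by gcongr; exact subtreeVar_le_treeVar f s)
    _ = treeVar children f := by
        rw [← mul_assoc 3, ← pow_succ', ← mul_assoc, mul_comm (3⁻¹ ^ _),
          three_pow_mul_three_inv_pow, one_mul]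

theorem treeVar_inf_indicator_general {A : List ℕ} (hA : IsVertex children A) (hn : 1 ≤ A.length)
    (hcard : ∀ s ∈ descendants children A.dropLast, 3 ≤ (children s).card) (c d : ℝ) :
    sInf (treeVar children '' {f | HasCylinderTrace children A c d f}) =
        3⁻¹ ^ A.length * edist c d ∧
      HasCylinderTrace children A c d (fun s => if A <+: s then c else d) ∧
      treeVar children (fun s => if A <+: s then c else d) = 3⁻¹ ^ A.length * edist c d := by
  have htrace := hasCylinderTrace_ite_prefix (children := children) A c d
  cases hA with
  | nil => simp at hn
  | append s a hs ha =>
    rw [List.dropLast_concat] at hcard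
    have hcard_child : ∀ b, ∀ t ∈ descendants children (s ++ [b]), 3 ≤ (children t).card :=
      fun b t ht => hcard t ⟨ht.1, (List.prefix_append s [b]).trans ht.2⟩
    have hcard_s : 3 ≤ (children s).card := hcard s ⟨hs, List.prefix_rfl⟩
    obtain ⟨b, hb, hba⟩ := (children s).exists_mem_ne (by omega) a
    have hval := treeVar_ite_prefix hs ha c d
    rw [List.length_append, List.length_singleton]
    refine ⟨le_antisymm (sInf_le ⟨_, htrace, hval⟩) (le_sInf ?_), htrace, hval⟩
    rintro _ ⟨f, hf, rfl⟩
    exact HasCylinderTrace.le_treeVar hf hs ha hb hba.symm (hcard_child a) (hcard_child b)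

/-- For a vertex `A₀` of depth `n ≥ 1`, the infimum of the weighted tree variation over all
functions converging to `1` along every branch through `A₀` and to `0` along every other
branch equals `3^{−n}`, and it is attained by the indicator function of the set of lists
having `A₀` as a prefix. -/
theorem treeVar_inf_indicator
    (children : List ℕ → Finset ℕ)
    (hcard : ∀ s : List ℕ, IsVertex children s → 3 ≤ (children s).card)
    (A₀ : List ℕ) (hA₀ : IsVertex children A₀) (hn : 1 ≤ A₀.length) :
    sInf (treeVar children ''
        {f : List ℕ → ℝ | ∀ x : ℕ → ℕ, IsBranch children x →
          (PassesThrough x A₀ → ConvergesAlong f x 1) ∧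
          (¬ PassesThrough x A₀ → ConvergesAlong f x 0)})
      = (3 : ENNReal)⁻¹ ^ A₀.length ∧
    (fun s => if A₀ <+: s then (1 : ℝ) else 0) ∈
        {f : List ℕ → ℝ | ∀ x : ℕ → ℕ, IsBranch children x →
          (PassesThrough x A₀ → ConvergesAlong f x 1) ∧
          (¬ PassesThrough x A₀ → ConvergesAlong f x 0)} ∧
    treeVar children (fun s => if A₀ <+: s then (1 : ℝ) else 0)
      = (3 : ENNReal)⁻¹ ^ A₀.length := by
  simpa [HasCylinderTrace, edist_dist] using
    treeVar_inf_indicator_general hA₀ hn (fun s hs => hcard s hs.1) 1 0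
end
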